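/- For every positive integer k and every finite set S of integers ≥ 2 there exist constants c, C > 0 with the following property: for every g ∈ ℤ[x] of degree k whose derivative g' is not the zero polynomial and such that every integer q ≥ 2 modulo which g' vanishes identically belongs to S, and for all reals X, Y ≥ 2 with c·log X ≥ log Y · log log Y, one has | #({1,…,⌊X⌋} ∩ W(g;Y)) − X·∏_{p ≤ Y}(1 − j(g;p)/p^{γ(g;p)}) | ≤ C·X·e^{−c·(log X)/(log Y)}, the product being over primes p ≤ Y. -/

import Mathlib

/-- `γ(g;p)`: the smallest positive integer `γ` such that the derivative `g'` does not vanish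
identically modulo `p^γ`. -/
noncomputable def gammaExp (g : Polynomial ℤ) (p : ℕ) : ℕ :=
  sInf {c : ℕ | 0 < c ∧ ¬ ∀ n : ℤ, ((p : ℤ) ^ c) ∣ (Polynomial.derivative g).eval n}

/-- `j(g;p)`: the number of residues `s` modulo `p^{γ(g;p)}` with `g'(s) ≡ 0 (mod p^{γ(g;p)})`. -/
noncomputable def jCount (g : Polynomial ℤ) (p : ℕ) : ℕ := by
  classical
  exact ((Finset.range (p ^ gammaExp g p)).filter
    (fun s => ((p : ℤ) ^ gammaExp g p) ∣ (Polynomial.derivative g).eval (s : ℤ))).card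

/-- `∏_{p ≤ Y} (1 - j(g;p)/p^{γ(g;p)})`, the product being over primes `p ≤ Y`. -/
noncomputable def wProd (g : Polynomial ℤ) (Y : ℝ) : ℝ := by
  classical
  exact ∏ p ∈ (Finset.range (⌊Y⌋₊ + 1)).filter Nat.Prime,
    (1 - (jCount g p : ℝ) / (p : ℝ) ^ gammaExp g p)

/-- `W(g;Y) = {n ∈ ℤ : g'(n) ≢ 0 (mod p^{γ(g;p)}) for all primes p ≤ Y}`. -/
def WSet (g : Polynomial ℤ) (Y : ℝ) : Set ℤ :=
  {n : ℤ | ∀ p : ℕ, p.Prime → (p : ℝ) ≤ Y →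
    ¬ ((p : ℤ) ^ gammaExp g p ∣ (Polynomial.derivative g).eval n)}

/-- `W_q(g;Y) = {n ∈ ℤ : g'(n) ≢ 0 (mod p^{γ(g;p)}) for all primes p ≤ Y with p^{γ(g;p)} ∣ q}`. -/
def WqSet (g : Polynomial ℤ) (Y : ℝ) (q : ℕ) : Set ℤ :=
  {n : ℤ | ∀ p : ℕ, p.Prime → (p : ℝ) ≤ Y → p ^ gammaExp g p ∣ q →
    ¬ ((p : ℤ) ^ gammaExp g p ∣ (Polynomial.derivative g).eval n)}


lemma cnt_mul (P : ℕ → Prop) [DecidablePred P] (M : ℕ) (h : Function.Periodic P M) (q : ℕ) :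
    ((Finset.Ico 1 (1 + q * M)).filter P).card = q * M.count P := by
  induction q with
  | zero => simp
  | succ q ih =>
    have h1 : Finset.Ico 1 (1 + (q+1) * M) = Finset.Ico 1 (1 + q * M) ∪
        Finset.Ico (1 + q * M) (1 + q * M + M) := by
      rw [Finset.Ico_union_Ico_eq_Ico (by omega) (by omega)]
      congr 1; ring
    rw [h1, Finset.filter_union, Finset.card_union_of_disjoint, ih,
      Nat.filter_Ico_card_eq_of_periodic _ _ _ h]
    · ring
    · apply Finset.disjoint_filter_filter
      exact Finset.Ico_disjoint_Ico_consecutive _ _ _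

lemma cnt_periodic (P : ℕ → Prop) [DecidablePred P] (M : ℕ) (hM : 0 < M)
    (h : Function.Periodic P M) (N : ℕ) :
    |(((Finset.Ico 1 (1 + N)).filter P).card : ℝ) - N * ((M.count P : ℝ) / M)| ≤ M.count P := by
  have hl : ((Finset.Ico 1 (1 + (N / M) * M)).filter P).card ≤
      ((Finset.Ico 1 (1 + N)).filter P).card := by
    apply Finset.card_le_card
    apply Finset.filter_subset_filter
    apply Finset.Ico_subset_Ico_right
    have := Nat.div_mul_le_self N M
    omega
  have hu : ((Finset.Ico 1 (1 + N)).filter P).card ≤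
      ((Finset.Ico 1 (1 + (N / M + 1) * M)).filter P).card := by
    apply Finset.card_le_card
    apply Finset.filter_subset_filter
    apply Finset.Ico_subset_Ico_right
    have := Nat.lt_div_mul_add hM (a := N)
    rw [add_mul]
    omega
  rw [cnt_mul P M h] at hl hu
  have h1 := Nat.div_mul_le_self N M
  have h2 := Nat.lt_div_mul_add hM (a := N)
  set q := N / M
  set J := M.count P
  set A := ((Finset.Ico 1 (1 + N)).filter P).card
  have hl' : (q : ℝ) * J ≤ A := by exact_mod_cast hl
  have hu' : (A : ℝ) ≤ (q + 1) * J := by exact_mod_cast hu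
  have hM' : (0 : ℝ) < M := by exact_mod_cast hM
  have h1' : (q : ℝ) ≤ N / M := by rw [le_div_iff₀ hM']; exact_mod_cast h1
  have h2' : (N : ℝ) / M ≤ q + 1 := by
    rw [div_le_iff₀ hM', add_mul, one_mul]; exact_mod_cast h2.le
  have hJ : (0 : ℝ) ≤ J := by positivity
  have e : (N : ℝ) * (J / M) = (N / M) * J := by ring
  rw [e, abs_le]
  have := mul_le_mul_of_nonneg_right h1' hJ
  have := mul_le_mul_of_nonneg_right h2' hJ
  constructor <;> linarith

lemma crt_count (P Q : ℕ → Prop) [DecidablePred P] [DecidablePred Q] (a b : ℕ) (ha : 0 < a)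
    (hb : 0 < b) (hab : a.Coprime b) (hP : Function.Periodic P a) (hQ : Function.Periodic Q b) :
    (a * b).count (fun n => P n ∧ Q n) = a.count P * b.count Q := by
  rw [Nat.count_eq_card_filter_range, Nat.count_eq_card_filter_range,
    Nat.count_eq_card_filter_range, ← Finset.card_product]
  apply Finset.card_nbij (fun n => (n % a, n % b))
  · intro n hn
    simp only [Finset.mem_coe, Finset.mem_filter, Finset.mem_range,
      Finset.mem_product] at hn ⊢
    rw [hP.map_mod_nat, hQ.map_mod_nat]
    exact ⟨⟨Nat.mod_lt _ ha, hn.2.1⟩, ⟨Nat.mod_lt _ hb, hn.2.2⟩⟩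
  · intro n hn m hm hnm
    simp only [Finset.coe_filter, Finset.mem_range, Set.mem_ofPred_eq, Prod.mk.injEq] at hn hm hnm
    have : n ≡ m [MOD a * b] := (Nat.modEq_and_modEq_iff_modEq_mul hab).1 ⟨hnm.1, hnm.2⟩
    exact Nat.ModEq.eq_of_lt_of_lt this hn.1 hm.1
  · rintro ⟨x, y⟩ hxy
    simp only [Finset.coe_product, Finset.coe_filter, Finset.mem_range, Set.mem_prod,
      Set.mem_ofPred_eq] at hxy
    obtain ⟨⟨hx, hPx⟩, hy, hQy⟩ := hxy
    refine ⟨Nat.chineseRemainder hab x y, ?_, ?_⟩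
    · simp only [Finset.coe_filter, Finset.mem_range, Set.mem_ofPred_eq]
      refine ⟨Nat.chineseRemainder_lt_mul hab x y ha.ne' hb.ne', ?_, ?_⟩
      · rw [← hP.map_mod_nat]
        have := (Nat.chineseRemainder hab x y).2.1
        rw [this, Nat.mod_eq_of_lt hx]; exact hPx
      · rw [← hQ.map_mod_nat]
        have := (Nat.chineseRemainder hab x y).2.2
        rw [this, Nat.mod_eq_of_lt hy]; exact hQy
    · have h1 := (Nat.chineseRemainder hab x y).2.1
      have h2 := (Nat.chineseRemainder hab x y).2.2
      simp only [Prod.mk.injEq]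
      exact ⟨by rw [h1, Nat.mod_eq_of_lt hx], by rw [h2, Nat.mod_eq_of_lt hy]⟩

open Classical in
lemma crt_prod (bad : ℕ → ℕ → Prop) (m : ℕ → ℕ) (T : Finset ℕ) (hm : ∀ p ∈ T, 0 < m p)
    (hco : ∀ p ∈ T, ∀ q ∈ T, p ≠ q → (m p).Coprime (m q))
    (hper : ∀ p ∈ T, Function.Periodic (bad p) (m p)) :
    Function.Periodic (fun n => ∀ p ∈ T, bad p n) (∏ p ∈ T, m p) ∧
    (∏ p ∈ T, m p).count (fun n => ∀ p ∈ T, bad p n) = ∏ p ∈ T, (m p).count (bad p) := by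
  induction T using Finset.induction_on with
  | empty => 
    refine ⟨fun n => by simp, by simp⟩
  | insert a s ha ih =>
    obtain ⟨ih1, ih2⟩ := ih (fun p hp => hm p (by simp [hp]))
      (fun p hp q hq => hco p (by simp [hp]) q (by simp [hq])) (fun p hp => hper p (by simp [hp]))
    have ha' := hper a (by simp)
    have e : (fun n => ∀ p ∈ insert a s, bad p n) = fun n => bad a n ∧ ∀ p ∈ s, bad p n := by
      funext n; simp
    rw [Finset.prod_insert ha, Finset.prod_insert ha]
    constructor
    · rw [e]
      intro n
      have h1 : bad a (n + m a * ∏ p ∈ s, m p) = bad a n := by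
        rw [mul_comm]; exact (ha'.nsmul (∏ p ∈ s, m p)) n
      have h2 := (ih1.nsmul (m a)) n
      simp only [smul_eq_mul] at h2
      change (_ ∧ _) = (_ ∧ _)
      rw [h1, h2]
    · rw [← ih2, ← crt_count _ _ _ _ (hm a (by simp)) (Finset.prod_pos fun p hp => hm p (by simp [hp]))
        _ ha' ih1]
      · congr 1
      · apply Nat.Coprime.prod_right
        intro q hq
        apply hco a (by simp) q (by simp [hq])
        rintro rfl; exact ha hq

lemma bonf (x : ℕ → ℝ) (s : Finset ℕ) (h0 : ∀ p ∈ s, 0 ≤ x p) (h1 : ∀ p ∈ s, x p ≤ 1) (r : ℕ) :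
    |∏ p ∈ s, (1 - x p) - ∑ T ∈ s.powerset, (if T.card < r then (-1) ^ T.card * ∏ p ∈ T, x p else 0)|
      ≤ ∑ T ∈ s.powerset, if T.card = r then ∏ p ∈ T, x p else 0 := by
  induction s using Finset.induction_on generalizing r with
  | empty => rcases r with _ | r <;> simp
  | insert a s ha ih =>
    have ih := ih (fun p hp => h0 p (by simp [hp])) (fun p hp => h1 p (by simp [hp]))
    have a0 := h0 a (by simp)
    have a1 := h1 a (by simp)
    rcases r with _ | r
    · simp only [not_lt_zero, if_false, Finset.sum_const_zero, sub_zero, Finset.card_eq_zero]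
      rw [Finset.abs_prod]
      simp only [Finset.sum_ite_eq', Finset.empty_mem_powerset, if_true, Finset.prod_empty]
      apply Finset.prod_le_one
      · intros; positivity
      · intro p hp
        rw [abs_le]; constructor <;> linarith [h0 p hp, h1 p hp]
    · rw [Finset.sum_powerset_insert ha, Finset.sum_powerset_insert ha, Finset.prod_insert ha]
      have e1 : ∑ t ∈ s.powerset, (if (insert a t).card < r + 1 then
          (-1 : ℝ) ^ (insert a t).card * ∏ p ∈ insert a t, x p else 0) = - x a *
          ∑ T ∈ s.powerset, (if T.card < r then (-1) ^ T.card * ∏ p ∈ T, x p else 0) := by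
        rw [Finset.mul_sum]
        apply Finset.sum_congr rfl
        intro t ht
        have hat : a ∉ t := fun h => ha (Finset.mem_powerset.1 ht h)
        rw [Finset.card_insert_of_notMem hat, Finset.prod_insert hat]
        simp only [add_lt_add_iff_right]
        split_ifs <;> ring
      have e2 : ∑ t ∈ s.powerset, (if (insert a t).card = r + 1 then
          ∏ p ∈ insert a t, x p else 0) = x a *
          ∑ T ∈ s.powerset, (if T.card = r then ∏ p ∈ T, x p else 0) := by
        rw [Finset.mul_sum]
        apply Finset.sum_congr rfl
        intro t ht
        have hat : a ∉ t := fun h => ha (Finset.mem_powerset.1 ht h)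
        rw [Finset.card_insert_of_notMem hat, Finset.prod_insert hat]
        simp only [add_left_inj]
        split_ifs <;> ring
      rw [e1, e2]
      have i1 := abs_le.1 (ih (r+1))
      have i2 := abs_le.1 (ih r)
      rw [abs_le]
      have j1 := mul_le_mul_of_nonneg_left i2.1 a0
      have j2 := mul_le_mul_of_nonneg_left i2.2 a0
      constructor <;> nlinarith

lemma prod_le_exp' (y : ℕ → ℝ) (s : Finset ℕ) (h0 : ∀ p ∈ s, 0 ≤ y p) :
    ∑ T ∈ s.powerset, ∏ p ∈ T, y p ≤ Real.exp (∑ p ∈ s, y p) := by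
  rw [← Finset.prod_one_add, Real.exp_sum]
  apply Finset.prod_le_prod
  · intro p hp; linarith [h0 p hp]
  · intro p hp; linarith [Real.add_one_le_exp (y p)]

/-- upper tail -/
lemma rankin1 (x : ℕ → ℝ) (s : Finset ℕ) (h0 : ∀ p ∈ s, 0 ≤ x p) (r : ℕ) (z : ℝ) (hz : 0 < z) :
    z ^ r * (∑ T ∈ s.powerset, if T.card = r then ∏ p ∈ T, x p else 0) ≤
      Real.exp (z * ∑ p ∈ s, x p) := by
  rw [Finset.mul_sum s, Finset.mul_sum]
  refine le_trans ?_ (prod_le_exp' (fun p => z * x p) s (fun p hp => mul_nonneg hz.le (h0 p hp)))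
  apply Finset.sum_le_sum
  intro T hT
  have : 0 ≤ ∏ p ∈ T, (z * x p) := Finset.prod_nonneg fun p hp =>
    mul_nonneg hz.le (h0 p (Finset.mem_powerset.1 hT hp))
  split_ifs with h
  · rw [Finset.prod_mul_distrib, Finset.prod_const, h]
  · simpa using this

lemma rankin2 (x : ℕ → ℝ) (s : Finset ℕ) (h0 : ∀ p ∈ s, 0 ≤ x p) (r : ℕ) (w : ℝ) (hw : 1 ≤ w)
    (hs : ∑ p ∈ s, x p ≤ w) :
    (∑ T ∈ s.powerset, if T.card ≤ r then ∏ p ∈ T, x p else 0) ≤ w ^ r * Real.exp 1 := by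
  have h1 := prod_le_exp' (fun p => x p / w) s (fun p hp => div_nonneg (h0 p hp) (by linarith))
  have h2 : ∑ p ∈ s, x p / w ≤ 1 := by
    rw [← Finset.sum_div, div_le_one (by linarith)]; exact hs
  have h3 := h1.trans (Real.exp_le_exp.2 h2)
  refine le_trans ?_ (mul_le_mul_of_nonneg_left h3 (by positivity))
  rw [Finset.mul_sum]
  apply Finset.sum_le_sum
  intro T hT
  have hn : 0 ≤ ∏ p ∈ T, x p := Finset.prod_nonneg fun p hp =>
    (h0 p (Finset.mem_powerset.1 hT hp))
  rw [Finset.prod_div_distrib, Finset.prod_const]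
  split_ifs with h
  · rw [mul_div_assoc', le_div_iff₀ (by positivity), mul_comm]
    exact mul_le_mul_of_nonneg_right (pow_le_pow_right₀ hw h) hn
  · positivity

lemma dyadic (i : ℕ) (hi : 1 ≤ i) :
    ∑ p ∈ (Finset.Ico (2^i) (2^(i+1))).filter Nat.Prime, (1 : ℝ) / p ≤ 4 / i := by
  set F := (Finset.Ico (2^i) (2^(i+1))).filter Nat.Prime
  have h1 : (2 ^ i) ^ F.card ≤ 4 ^ (2 ^ (i+1)) := by
    calc (2 ^ i) ^ F.card ≤ ∏ p ∈ F, p := by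
          apply Finset.pow_card_le_prod
          intro p hp
          simp only [F, Finset.mem_filter, Finset.mem_Ico] at hp
          exact hp.1.1
      _ ≤ primorial (2^(i+1)) := by
          unfold primorial
          apply Finset.prod_le_prod_of_subset_of_one_le'
          · intro p hp
            simp only [F, Finset.mem_filter, Finset.mem_Ico] at hp
            simp [Finset.mem_filter]
            exact ⟨by omega, hp.2⟩
          · intro p hp _
            simp [Finset.mem_filter] at hp
            exact hp.2.one_lt.le
      _ ≤ _ := primorial_le_four_pow _
  have h2 : i * F.card ≤ 4 * 2 ^ i := by
    have : (4:ℕ) = 2 ^ 2 := by norm_num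
    rw [this, ← pow_mul, ← pow_mul] at h1
    have := (Nat.pow_le_pow_iff_right (by norm_num : 1 < 2)).1 h1
    rw [pow_succ] at this
    omega
  have h3 : ∑ p ∈ F, (1 : ℝ) / p ≤ F.card • ((1 : ℝ) / 2 ^ i) := by
    apply Finset.sum_le_card_nsmul
    intro p hp
    simp only [F, Finset.mem_filter, Finset.mem_Ico] at hp
    apply one_div_le_one_div_of_le (by positivity)
    exact_mod_cast hp.1.1
  refine h3.trans ?_
  have hi' : (0 : ℝ) < i := by exact_mod_cast hi
  rw [nsmul_eq_mul, mul_one_div, div_le_div_iff₀ (by positivity) hi', mul_comm]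
  exact_mod_cast h2

lemma mertens_dy (m : ℕ) :
    ∑ p ∈ (Finset.range (2^(m+1))).filter Nat.Prime, (1 : ℝ) / p ≤ 4 * (harmonic m : ℝ) := by
  induction m with
  | zero => 
    have : (Finset.range (2^(0+1))).filter Nat.Prime = ∅ := by decide
    rw [this]; simp
  | succ m ih =>
    have h : Finset.range (2^(m+1+1)) = Finset.range (2^(m+1)) ∪ Finset.Ico (2^(m+1)) (2^(m+1+1)) := by
      rw [Finset.range_eq_Ico, Finset.range_eq_Ico, Finset.Ico_union_Ico_eq_Ico (by simp)]
      exact Nat.pow_le_pow_right (by norm_num) (by omega)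
    rw [h, Finset.filter_union, Finset.sum_union]
    · have := dyadic (m+1) (by omega)
      rw [harmonic_succ]
      push_cast at this ⊢
      rw [div_eq_mul_inv] at this
      linarith
    · apply Finset.disjoint_filter_filter
      rw [Finset.range_eq_Ico]
      exact Finset.Ico_disjoint_Ico_consecutive _ _ _

lemma mertens (Y : ℝ) (hY : 2 ≤ Y) :
    ∑ p ∈ (Finset.range (⌊Y⌋₊ + 1)).filter Nat.Prime, (1 : ℝ) / p
      ≤ 4 * (Real.log (Real.log Y) + 2) := by
  set n := ⌊Y⌋₊
  have hn : 2 ≤ n := Nat.le_floor (by exact_mod_cast hY)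
  set m := Nat.log 2 n
  have hm : 1 ≤ m := Nat.log_pos (by norm_num) hn
  have h1 : n < 2 ^ (m+1) := Nat.lt_pow_succ_log_self (by norm_num) n
  have h2 : 2 ^ m ≤ n := Nat.pow_log_le_self 2 (by omega)
  have h3 : (2:ℝ) ^ m ≤ Y := le_trans (by exact_mod_cast h2) (Nat.floor_le (by linarith))
  have h4 : ∑ p ∈ (Finset.range (n + 1)).filter Nat.Prime, (1 : ℝ) / p ≤
      ∑ p ∈ (Finset.range (2^(m+1))).filter Nat.Prime, (1 : ℝ) / p := by
    apply Finset.sum_le_sum_of_subset_of_nonneg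
    · apply Finset.filter_subset_filter
      apply Finset.range_subset_range.2; omega
    · intros; positivity
  have h5 := mertens_dy m
  have h6 := harmonic_le_one_add_log m
  have hl2 := Real.log_two_gt_d9
  have hm' : (1:ℝ) ≤ m := by exact_mod_cast hm
  have h7 : m * Real.log 2 ≤ Real.log Y := by
    rw [← Real.log_pow]; exact Real.log_le_log (by positivity) h3
  have h8 : Real.log m + Real.log (Real.log 2) ≤ Real.log (Real.log Y) := by
    rw [← Real.log_mul (by positivity) (by positivity)]
    exact Real.log_le_log (by positivity) h7
  have h9 : -1 ≤ Real.log (Real.log 2) := by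
    rw [Real.le_log_iff_exp_le (by positivity)]
    have := Real.exp_neg_one_lt_d9
    linarith
  linarith

open Classical in
lemma AT_bound (bad : ℕ → ℕ → Prop) (m : ℕ → ℕ) (T : Finset ℕ) (hm : ∀ p ∈ T, 0 < m p)
    (hco : ∀ p ∈ T, ∀ q ∈ T, p ≠ q → (m p).Coprime (m q))
    (hper : ∀ p ∈ T, Function.Periodic (bad p) (m p)) (X : ℝ) (hX : 0 ≤ X) :
    |(((Finset.Ico 1 (1 + ⌊X⌋₊)).filter (fun n => ∀ p ∈ T, bad p n)).card : ℝ) -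
      X * ∏ p ∈ T, (((m p).count (bad p) : ℝ) / m p)| ≤ 2 * ∏ p ∈ T, ((m p).count (bad p) : ℝ) := by
  obtain ⟨h1, h2⟩ := crt_prod bad m T hm hco hper
  have hM : 0 < ∏ p ∈ T, m p := Finset.prod_pos hm
  have h3 := cnt_periodic _ _ hM h1 ⌊X⌋₊
  rw [h2] at h3
  push_cast at h3
  rw [← Finset.prod_div_distrib] at h3
  have f1 := Nat.floor_le hX
  have f2 := Nat.lt_floor_add_one X
  have hx0 : 0 ≤ ∏ p ∈ T, (((m p).count (bad p) : ℝ) / m p) := Finset.prod_nonneg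
    fun p hp => by positivity
  have hxJ : ∏ p ∈ T, (((m p).count (bad p) : ℝ) / m p) ≤ ∏ p ∈ T, ((m p).count (bad p) : ℝ) := by
    apply Finset.prod_le_prod
    · intros; positivity
    · intro p hp
      apply div_le_self (by positivity)
      exact_mod_cast hm p hp
  rw [abs_le] at h3 ⊢
  constructor <;> nlinarith

open Classical in
lemma sieve (bad : ℕ → ℕ → Prop) (m : ℕ → ℕ) (s : Finset ℕ) (hm : ∀ p ∈ s, 0 < m p)
    (hco : ∀ p ∈ s, ∀ q ∈ s, p ≠ q → (m p).Coprime (m q))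
    (hper : ∀ p ∈ s, Function.Periodic (bad p) (m p)) (X : ℝ) (hX : 0 ≤ X) (r : ℕ) :
    |(((Finset.Ico 1 (1 + ⌊X⌋₊)).filter (fun n => ∀ p ∈ s, ¬ bad p n)).card : ℝ) -
      X * ∏ p ∈ s, (1 - ((m p).count (bad p) : ℝ) / m p)| ≤
      2 * (∑ T ∈ s.powerset, if T.card ≤ r then ∏ p ∈ T, ((m p).count (bad p) : ℝ) else 0) +
      2 * X * (∑ T ∈ s.powerset, if T.card = r then
        ∏ p ∈ T, (((m p).count (bad p) : ℝ) / m p) else 0) := by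
  set j : ℕ → ℝ := fun p => ((m p).count (bad p) : ℝ) with hj
  set x : ℕ → ℝ := fun p => j p / m p with hx
  set I := Finset.Ico 1 (1 + ⌊X⌋₊)
  set A : Finset ℕ → ℝ := fun T => ((I.filter (fun n => ∀ p ∈ T, bad p n)).card : ℝ) with hA
  have hj0 : ∀ p, 0 ≤ j p := fun p => by positivity
  have hx0 : ∀ p, 0 ≤ x p := fun p => by positivity
  have hx1 : ∀ p ∈ s, x p ≤ 1 := by
    intro p hp
    have : (0:ℝ) < m p := by exact_mod_cast hm p hp
    rw [hx]; simp only
    rw [div_le_one this]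
    simp only [hj]
    exact_mod_cast Nat.count_le _
  have hAT : ∀ T ∈ s.powerset, |A T - X * ∏ p ∈ T, x p| ≤ 2 * ∏ p ∈ T, j p := by
    intro T hT
    have hT := Finset.mem_powerset.1 hT
    exact AT_bound bad m T (fun p hp => hm p (hT hp))
      (fun p hp q hq => hco p (hT hp) q (hT hq)) (fun p hp => hper p (hT hp)) X hX
  have hprodind : ∀ T : Finset ℕ, ∀ n, ∏ p ∈ T, (if bad p n then (1:ℝ) else 0) =
      if ∀ p ∈ T, bad p n then 1 else 0 := by
    intro T n
    rw [Finset.prod_ite_zero]; simp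
  have hAsum : ∀ T : Finset ℕ, A T = ∑ n ∈ I, ∏ p ∈ T, (if bad p n then (1:ℝ) else 0) := by
    intro T
    simp only [hprodind, hA]
    rw [Finset.sum_boole]
  have hcount : ((I.filter (fun n => ∀ p ∈ s, ¬ bad p n)).card : ℝ) =
      ∑ n ∈ I, ∏ p ∈ s, (1 - (if bad p n then (1:ℝ) else 0)) := by
    rw [← Finset.sum_boole]
    apply Finset.sum_congr rfl
    intro n _
    have : ∀ p ∈ s, (1 - (if bad p n then (1:ℝ) else 0)) = if ¬ bad p n then 1 else 0 := by
      intro p _; by_cases h : bad p n <;> simp [h]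
    rw [Finset.prod_congr rfl this, Finset.prod_ite_zero]; simp
  have hB1 : |((I.filter (fun n => ∀ p ∈ s, ¬ bad p n)).card : ℝ) -
      ∑ T ∈ s.powerset, (if T.card < r then (-1) ^ T.card * A T else 0)| ≤
      ∑ T ∈ s.powerset, if T.card = r then A T else 0 := by
    have e1 : ∑ T ∈ s.powerset, (if T.card < r then (-1 : ℝ) ^ T.card * A T else 0) =
        ∑ n ∈ I, ∑ T ∈ s.powerset, (if T.card < r then
          (-1) ^ T.card * ∏ p ∈ T, (if bad p n then (1:ℝ) else 0) else 0) := by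
      rw [Finset.sum_comm]
      apply Finset.sum_congr rfl
      intro T _
      split_ifs
      · rw [hAsum, Finset.mul_sum]
      · simp
    have e2 : ∑ T ∈ s.powerset, (if T.card = r then A T else 0) =
        ∑ n ∈ I, ∑ T ∈ s.powerset, (if T.card = r then
          ∏ p ∈ T, (if bad p n then (1:ℝ) else 0) else 0) := by
      rw [Finset.sum_comm]
      apply Finset.sum_congr rfl
      intro T _
      split_ifs
      · rw [hAsum]
      · simp
    rw [e1, e2, hcount, ← Finset.sum_sub_distrib]
    refine (Finset.abs_sum_le_sum_abs _ _).trans (Finset.sum_le_sum fun n _ => ?_)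
    apply bonf
    · intros; split_ifs <;> norm_num
    · intros; split_ifs <;> norm_num
  have hB2 := bonf x s (fun p _ => hx0 p) hx1 r
  have hD : |∑ T ∈ s.powerset, (if T.card < r then (-1 : ℝ) ^ T.card * A T else 0) -
      X * ∑ T ∈ s.powerset, (if T.card < r then (-1 : ℝ) ^ T.card * ∏ p ∈ T, x p else 0)| ≤
      2 * ∑ T ∈ s.powerset, (if T.card < r then ∏ p ∈ T, j p else 0) := by
    rw [Finset.mul_sum, Finset.mul_sum, ← Finset.sum_sub_distrib]
    refine (Finset.abs_sum_le_sum_abs _ _).trans (Finset.sum_le_sum fun T hT => ?_)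
    split_ifs
    · rw [show (-1 : ℝ) ^ T.card * A T - X * ((-1 : ℝ) ^ T.card * ∏ p ∈ T, x p) =
        (-1) ^ T.card * (A T - X * ∏ p ∈ T, x p) by ring, abs_mul, abs_pow, abs_neg, abs_one,
        one_pow, one_mul]
      exact hAT T hT
    · simp
  have hE : ∑ T ∈ s.powerset, (if T.card = r then A T else 0) ≤
      X * ∑ T ∈ s.powerset, (if T.card = r then ∏ p ∈ T, x p else 0) +
      2 * ∑ T ∈ s.powerset, (if T.card = r then ∏ p ∈ T, j p else 0) := by
    rw [Finset.mul_sum, Finset.mul_sum, ← Finset.sum_add_distrib]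
    apply Finset.sum_le_sum
    intro T hT
    split_ifs
    · linarith [(abs_le.1 (hAT T hT)).2]
    · simp
  have hF : ∑ T ∈ s.powerset, (if T.card ≤ r then ∏ p ∈ T, j p else 0) =
      ∑ T ∈ s.powerset, (if T.card < r then ∏ p ∈ T, j p else 0) +
      ∑ T ∈ s.powerset, (if T.card = r then ∏ p ∈ T, j p else 0) := by
    rw [← Finset.sum_add_distrib]
    apply Finset.sum_congr rfl
    intro T _
    rcases lt_trichotomy T.card r with h | h | h
    · simp [h, h.le, h.ne]
    · simp [h]
    · simp [h.not_ge, h.not_gt, h.ne']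
  rw [hF]
  rw [abs_le] at hB1 hB2 hD ⊢
  have k1 := mul_le_mul_of_nonneg_left hB2.1 hX
  have k2 := mul_le_mul_of_nonneg_left hB2.2 hX
  constructor <;> linarith

set_option maxHeartbeats 1000000 in
open Classical in
lemma analytic (K : ℕ) (hK : 1 ≤ K) : ∃ c C : ℝ, 0 < c ∧ 0 < C ∧
    ∀ (bad : ℕ → ℕ → Prop) (m : ℕ → ℕ), (∀ p, p.Prime → p ≤ m p) →
    (∀ p q, p.Prime → q.Prime → p ≠ q → (m p).Coprime (m q)) →
    (∀ p, p.Prime → Function.Periodic (bad p) (m p)) →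
    (∀ p, p.Prime → (m p).count (bad p) ≤ K) →
    ∀ X Y : ℝ, 2 ≤ X → 2 ≤ Y → c * Real.log X ≥ Real.log Y * Real.log (Real.log Y) →
    ∀ s : Finset ℕ, s = (Finset.range (⌊Y⌋₊ + 1)).filter Nat.Prime →
    |(((Finset.Ico 1 (1 + ⌊X⌋₊)).filter (fun n => ∀ p ∈ s, ¬ bad p n)).card : ℝ) -
      X * ∏ p ∈ s, (1 - ((m p).count (bad p) : ℝ) / m p)| ≤
      C * X * Real.exp (-c * Real.log X / Real.log Y) := by
  have hK' : (1:ℝ) ≤ K := by exact_mod_cast hK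
  set δ : ℝ := 1 / (2 * (K + 2)) with hδ
  have hδ0 : 0 < δ := by positivity
  have hδ1 : δ ≤ 1 / 4 := by
    rw [hδ]; apply one_div_le_one_div_of_le <;> linarith
  have hδK : (K + 2) * δ = 1 / 2 := by rw [hδ]; field_simp
  set c : ℝ := δ / (64 * K) with hc
  have hc0 : 0 < c := by positivity
  have hcδ : c ≤ δ := div_le_self hδ0.le (by linarith)
  have hcK : 64 * K * c = δ := by rw [hc]; field_simp
  set U : ℝ := 2 * (64 * K + 1) / δ with hU
  have hUδ : δ * U = 2 * (64 * K + 1) := by rw [hU]; field_simp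
  refine ⟨c, Real.exp (c * U) + 12, hc0, by positivity, ?_⟩
  intro bad m hpm hco hper hcount X Y hX hY hXY s hs
  have hsp : ∀ p ∈ s, p.Prime := fun p hp => by rw [hs] at hp; exact (Finset.mem_filter.1 hp).2
  have hlY : 1 / 2 ≤ Real.log Y := by
    have := Real.log_le_log (by norm_num) hY
    linarith [Real.log_two_gt_d9]
  have hlX : 1 / 2 ≤ Real.log X := by
    have := Real.log_le_log (by norm_num) hX
    linarith [Real.log_two_gt_d9]
  have hlY0 : 0 < Real.log Y := by linarith
  set u := Real.log X / Real.log Y with hu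
  have hu0 : 0 < u := by rw [hu]; apply div_pos <;> linarith
  have huY : u * Real.log Y = Real.log X := by rw [hu]; field_simp
  have hLu : Real.log (Real.log Y) ≤ c * u := by
    rw [hu, mul_div_assoc', le_div_iff₀ hlY0]; linarith
  have hu2 : u ≤ 2 * Real.log X := by nlinarith
  have hexp : -c * Real.log X / Real.log Y = -(c * u) := by rw [hu]; ring
  rw [hexp]
  have hX0 : 0 ≤ X := by linarith
  have hmpos : ∀ p ∈ s, 0 < m p := fun p hp =>
    (hsp p hp).pos.trans_le (hpm p (hsp p hp))
  have hx1 : ∀ p ∈ s, ((m p).count (bad p) : ℝ) / m p ≤ 1 := by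
    intro p hp
    have : (0:ℝ) < m p := by exact_mod_cast hmpos p hp
    rw [div_le_one this]
    exact_mod_cast Nat.count_le _
  rcases le_total u U with hcase | hcase
  · have a1 : (((Finset.Ico 1 (1 + ⌊X⌋₊)).filter (fun n => ∀ p ∈ s, ¬ bad p n)).card : ℝ) ≤ X := by
      refine le_trans ?_ (Nat.floor_le hX0)
      have := Finset.card_filter_le (Finset.Ico 1 (1 + ⌊X⌋₊)) (fun n => ∀ p ∈ s, ¬ bad p n)
      rw [Nat.card_Ico] at this
      have h2 : 1 + ⌊X⌋₊ - 1 = ⌊X⌋₊ := by omega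
      rw [h2] at this
      exact_mod_cast this
    have a0 : (0:ℝ) ≤ (((Finset.Ico 1 (1 + ⌊X⌋₊)).filter (fun n => ∀ p ∈ s, ¬ bad p n)).card : ℝ) := by
      positivity
    have b0 : 0 ≤ ∏ p ∈ s, (1 - ((m p).count (bad p) : ℝ) / m p) :=
      Finset.prod_nonneg fun p hp => by linarith [hx1 p hp]
    have b1 : ∏ p ∈ s, (1 - ((m p).count (bad p) : ℝ) / m p) ≤ 1 :=
      Finset.prod_le_one (fun p hp => by linarith [hx1 p hp]) (fun p hp => by
        have : 0 ≤ ((m p).count (bad p) : ℝ) / m p := by positivity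
        linarith)
    have h1 : X ≤ (Real.exp (c * U) + 12) * X * Real.exp (-(c * u)) := by
      have e1 : 1 ≤ Real.exp (c * U) * Real.exp (-(c * u)) := by
        rw [← Real.exp_add, Real.one_le_exp_iff]
        nlinarith
      have e2 := Real.exp_pos (-(c * u))
      nlinarith [mul_le_mul_of_nonneg_left e1 hX0, mul_nonneg hX0 e2.le]
    rw [abs_le]
    constructor <;> nlinarith
  · set r := ⌊δ * u⌋₊ with hr
    have hr1 : (r : ℝ) ≤ δ * u := Nat.floor_le (by positivity)
    have hr2 : δ * u < r + 1 := Nat.lt_floor_add_one _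
    have hS := sieve bad m s hmpos
      (fun p hp q hq => hco p q (hsp p hp) (hsp q hq)) (fun p hp => hper p (hsp p hp)) X hX0 r
    refine hS.trans ?_
    have hE : ∑ p ∈ s, ((m p).count (bad p) : ℝ) / m p ≤ K * (4 * (Real.log (Real.log Y) + 2)) := by
      refine le_trans ?_ (mul_le_mul_of_nonneg_left (mertens Y hY) (by positivity))
      rw [← hs]
      rw [Finset.mul_sum]
      apply Finset.sum_le_sum
      intro p hp
      have hp0 : (0:ℝ) < p := by exact_mod_cast (hsp p hp).pos
      have h1 : ((m p).count (bad p) : ℝ) ≤ K := by exact_mod_cast hcount p (hsp p hp)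
      have h2 : (p:ℝ) ≤ m p := by exact_mod_cast hpm p (hsp p hp)
      rw [mul_one_div]
      exact div_le_div₀ (by positivity) h1 hp0 h2
    have hr3 : Real.exp 2 * ∑ p ∈ s, ((m p).count (bad p) : ℝ) / m p ≤ r := by
      have e2 : Real.exp 2 ≤ 8 := by
        have h := Real.exp_one_lt_d9
        have : Real.exp 2 = Real.exp 1 * Real.exp 1 := by rw [← Real.exp_add]; norm_num
        nlinarith [Real.exp_pos 1]
      have e0 : 0 ≤ ∑ p ∈ s, ((m p).count (bad p) : ℝ) / m p :=
        Finset.sum_nonneg fun p _ => by positivity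
      have e3 : K * (4 * (Real.log (Real.log Y) + 2)) ≤ K * (4 * (c * u + 2)) := by
        apply mul_le_mul_of_nonneg_left _ (by positivity); linarith
      have e4 : 8 * (K * (4 * (c * u + 2))) = δ * u / 2 + 64 * K := by
        rw [← hcK]; ring
      have e5 : δ * U ≤ δ * u := mul_le_mul_of_nonneg_left hcase hδ0.le
      have e6 := mul_le_mul_of_nonneg_right e2 e0
      linarith
    have hR1 := rankin1 (fun p => ((m p).count (bad p) : ℝ) / m p) s
      (fun p _ => by positivity) r (Real.exp 2) (Real.exp_pos 2)
    set e := ∑ T ∈ s.powerset, (if T.card = r then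
        ∏ p ∈ T, (((m p).count (bad p) : ℝ) / m p) else 0)
    have he : e ≤ 3 * Real.exp (-(c * u)) := by
      have h1 := hR1.trans (Real.exp_le_exp.2 hr3)
      rw [← Real.exp_nat_mul] at h1
      have h2 : e ≤ Real.exp (-(r:ℝ)) := by
        have h3 := mul_le_mul_of_nonneg_left h1 (Real.exp_pos (-(r * 2 : ℝ))).le
        rw [← mul_assoc, ← Real.exp_add, ← Real.exp_add] at h3
        have h4 : -(r * 2 : ℝ) + r * 2 = 0 := by ring
        have h5 : -(r * 2 : ℝ) + r = -r := by ring
        rw [h4, h5, Real.exp_zero, one_mul] at h3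
        exact h3
      have h6 : Real.exp (-(r:ℝ)) ≤ Real.exp (1 + -(c * u)) := by
        apply Real.exp_le_exp.2; nlinarith
      rw [Real.exp_add] at h6
      have := Real.exp_one_lt_d9
      nlinarith [Real.exp_pos (-(c * u))]
    have hR2 := rankin2 (fun p => ((m p).count (bad p) : ℝ)) s (fun p _ => by positivity) r
      (2 * K * Y) (by nlinarith) (by
        calc ∑ p ∈ s, ((m p).count (bad p) : ℝ) ≤ s.card • (K:ℝ) := by
              apply Finset.sum_le_card_nsmul
              intro p hp
              exact_mod_cast hcount p (hsp p hp)
          _ ≤ (⌊Y⌋₊ + 1) * (K:ℝ) := by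
              rw [nsmul_eq_mul]
              apply mul_le_mul_of_nonneg_right _ (by positivity)
              have := Finset.card_filter_le (Finset.range (⌊Y⌋₊ + 1)) Nat.Prime
              rw [← hs] at this
              rw [Finset.card_range] at this
              exact_mod_cast this
          _ ≤ _ := by
              have := Nat.floor_le (show (0:ℝ) ≤ Y by linarith)
              nlinarith)
    have hw : (2 * K * Y) ^ r ≤ X * Real.exp (-(c * u)) := by
      have hY0 : 0 < Y := by linarith
      have h1 : 2 * K * Y ≤ Y ^ (K + 2) := by
        have k1 : (K : ℝ) ≤ 2 ^ K := by exact_mod_cast Nat.lt_two_pow_self.le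
        have k2 : (2:ℝ) ^ K ≤ Y ^ K := pow_le_pow_left₀ (by norm_num) hY K
        calc 2 * K * Y ≤ Y * Y ^ K * Y := by
              apply mul_le_mul_of_nonneg_right _ hY0.le
              apply mul_le_mul hY (k1.trans k2) (by positivity) hY0.le
          _ = _ := by ring
      have h2 : (2 * K * Y) ^ r ≤ (Y ^ (K + 2)) ^ r := pow_le_pow_left₀ (by positivity) h1 r
      have h3 : (Y ^ (K + 2)) ^ r = Real.exp (((K:ℝ) + 2) * r * Real.log Y) := by
        rw [← pow_mul, ← Real.rpow_natCast, Real.rpow_def_of_pos hY0]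
        congr 1; push_cast; ring
      rw [h3] at h2
      refine h2.trans ?_
      have h4 : X * Real.exp (-(c * u)) = Real.exp (Real.log X + -(c * u)) := by
        rw [Real.exp_add, Real.exp_log (by linarith)]
      rw [h4]
      apply Real.exp_le_exp.2
      have h5 : ((K:ℝ) + 2) * r ≤ u / 2 := by
        calc ((K:ℝ) + 2) * r ≤ (K + 2) * (δ * u) :=
              mul_le_mul_of_nonneg_left hr1 (by positivity)
          _ = ((K + 2) * δ) * u := by ring
          _ = _ := by rw [hδK]; ring
      have h6 := mul_le_mul_of_nonneg_right h5 hlY0.le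
      have h7 : u / 2 * Real.log Y = Real.log X / 2 := by rw [← huY]; ring
      have h8 : c * u ≤ 1 / 4 * (2 * Real.log X) :=
        mul_le_mul (hcδ.trans hδ1) hu2 hu0.le (by norm_num)
      linarith
    have hpos : 0 ≤ X * Real.exp (-(c * u)) := by positivity
    have f1 : 2 * ((2 * K * Y) ^ r * Real.exp 1) ≤ 6 * (X * Real.exp (-(c * u))) := by
      have h := Real.exp_one_lt_d9
      have h0 : 0 ≤ (2 * K * Y) ^ r := by positivity
      nlinarith
    have f2 : 2 * X * e ≤ 6 * (X * Real.exp (-(c * u))) := by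
      nlinarith [mul_le_mul_of_nonneg_left he hX0]
    have f3 : 0 ≤ Real.exp (c * U) * (X * Real.exp (-(c * u))) := by positivity
    linarith

lemma gamma_spec (g : Polynomial ℤ) (S : Finset ℤ) (M : ℕ) (hM : ∀ s ∈ S, s ≤ M)
    (h : ∀ q : ℤ, 2 ≤ q → (∀ n : ℤ, q ∣ (Polynomial.derivative g).eval n) → q ∈ S)
    (p : ℕ) (hp : p.Prime) :
    0 < gammaExp g p ∧ (¬ ∀ n : ℤ, ((p : ℤ) ^ gammaExp g p) ∣ (Polynomial.derivative g).eval n) ∧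
      (gammaExp g p = 1 ∨ p ^ gammaExp g p ≤ M ^ 2) := by
  have hne : {c : ℕ | 0 < c ∧ ¬ ∀ n : ℤ, ((p : ℤ) ^ c) ∣ (Polynomial.derivative g).eval n}.Nonempty := by
    refine ⟨M + 1, by omega, fun hc => ?_⟩
    have h1 : M + 1 < p ^ (M + 1) := Nat.lt_pow_self hp.one_lt
    have h1' : (M:ℤ) + 1 < (p:ℤ) ^ (M + 1) := by exact_mod_cast h1
    have h2 := hM _ (h _ (by omega) hc)
    omega
  have hmem := Nat.sInf_mem hne
  change 0 < gammaExp g p ∧ _ at hmem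
  refine ⟨hmem.1, hmem.2, ?_⟩
  by_cases h1 : gammaExp g p = 1
  · exact Or.inl h1
  right
  obtain ⟨d, hd⟩ : ∃ d, gammaExp g p = d + 2 := ⟨gammaExp g p - 2, by have := hmem.1; omega⟩
  have hlt : d + 1 < gammaExp g p := by omega
  have hn := Nat.notMem_of_lt_sInf hlt
  have hv : ∀ n : ℤ, ((p : ℤ) ^ (d+1)) ∣ (Polynomial.derivative g).eval n := by
    by_contra hcon
    exact hn ⟨by omega, hcon⟩
  have h2 : 2 ≤ p ^ (d + 1) := hp.two_le.trans (Nat.le_self_pow (by omega) p)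
  have h3 := hM _ (h _ (by exact_mod_cast h2) hv)
  have h4 : p ^ (d + 1) ≤ M := by exact_mod_cast h3
  rw [hd]
  calc p ^ (d + 2) ≤ p ^ ((d + 1) * 2) := Nat.pow_le_pow_right hp.pos (by omega)
    _ = (p ^ (d + 1)) ^ 2 := by rw [pow_mul]
    _ ≤ _ := Nat.pow_le_pow_left h4 2

open Classical in
lemma jCount_eq (g : Polynomial ℤ) (p : ℕ) : jCount g p =
    ((Finset.range (p ^ gammaExp g p)).filter
      (fun s : ℕ => ((p : ℤ) ^ gammaExp g p) ∣ (Polynomial.derivative g).eval (s : ℤ))).card := by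
  unfold jCount
  rw [← Finset.card_image_of_injective _ (Nat.cast_injective (R := ℤ))]
  congr 1
  ext n
  simp only [Finset.mem_filter, Finset.bind_def, Finset.pure_def, Finset.mem_sup,
    Finset.mem_singleton, Finset.mem_image]
  constructor
  · rintro ⟨⟨a, ha, rfl⟩, h⟩
    exact ⟨a, ⟨ha, h⟩, rfl⟩
  · rintro ⟨a, ⟨ha, h⟩, rfl⟩
    exact ⟨⟨a, ha, rfl⟩, h⟩

lemma j_le (g : Polynomial ℤ) (k M : ℕ) (hk : g.natDegree = k) (p : ℕ) (hp : p.Prime)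
    (h1 : ¬ ∀ n : ℤ, ((p : ℤ) ^ gammaExp g p) ∣ (Polynomial.derivative g).eval n)
    (h2 : gammaExp g p = 1 ∨ p ^ gammaExp g p ≤ M ^ 2) : jCount g p ≤ k + M ^ 2 := by
  classical
  rw [jCount_eq]
  rcases h2 with h2 | h2
  · rw [h2] at h1 ⊢
    simp only [pow_one] at h1 ⊢
    have : Fact p.Prime := ⟨hp⟩
    set f := (Polynomial.derivative g).map (Int.castRingHom (ZMod p)) with hf
    have hev : ∀ n : ℤ, ((p:ℤ) ∣ (Polynomial.derivative g).eval n) ↔ f.eval (n : ZMod p) = 0 := by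
      intro n
      rw [← ZMod.intCast_zmod_eq_zero_iff_dvd, hf]
      have := Polynomial.eval_intCast_map (Int.castRingHom (ZMod p)) (Polynomial.derivative g) n
      simp only [eq_intCast, Int.cast_id] at this
      rw [this]
    have hf0 : f ≠ 0 := by
      intro h0
      apply h1
      intro n
      rw [hev, h0]; simp
    have hdeg : f.natDegree ≤ k := by
      refine Polynomial.natDegree_map_le.trans ?_
      refine (Polynomial.natDegree_derivative_le g).trans ?_
      omega
    have : ((Finset.range p).filter (fun s : ℕ => (p:ℤ) ∣ (Polynomial.derivative g).eval (s:ℤ))).card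
        ≤ f.roots.toFinset.card := by
      apply Finset.card_le_card_of_injOn (fun s : ℕ => (s : ZMod p))
      · intro n hn
        simp only [Finset.coe_filter, Finset.mem_range, Set.mem_ofPred_eq] at hn
        simp only [Finset.mem_coe, Multiset.mem_toFinset]
        rw [Polynomial.mem_roots hf0, Polynomial.IsRoot]
        have := (hev n).1 hn.2
        simpa using this
      · intro a ha b hb hab
        simp only [Finset.coe_filter, Finset.mem_range, Set.mem_ofPred_eq] at ha hb
        have := (ZMod.natCast_eq_natCast_iff a b p).1 hab
        exact Nat.ModEq.eq_of_lt_of_lt this ha.1 hb.1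
    have h3 := Multiset.toFinset_card_le f.roots
    have h4 := Polynomial.card_roots' f
    omega
  · have := Finset.card_filter_le (Finset.range (p ^ gammaExp g p))
      (fun s : ℕ => ((p : ℤ) ^ gammaExp g p) ∣ (Polynomial.derivative g).eval (s : ℤ))
    rw [Finset.card_range] at this
    omega

/-- The Brun-sieve count (Lemma 3.6 / Rice, Proposition 2.4): for `g` of degree `k` whose
derivative vanishes identically only modulo moduli from the finite set `S`, and `X, Y ≥ 2`
with `c·log X ≥ log Y · log log Y`,
`#({1,…,⌊X⌋} ∩ W(g;Y)) = X·∏_{p ≤ Y}(1 - j(g;p)/p^{γ(g;p)}) + O(X·e^{-c·log X/log Y})`. -/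
theorem stmt8 (k : ℕ) (hk : 0 < k) (S : Finset ℤ) (hS : ∀ s ∈ S, 2 ≤ s) :
    ∃ c C : ℝ, 0 < c ∧ 0 < C ∧
      ∀ g : Polynomial ℤ, g.natDegree = k → Polynomial.derivative g ≠ 0 →
        (∀ q : ℤ, 2 ≤ q → (∀ n : ℤ, q ∣ (Polynomial.derivative g).eval n) → q ∈ S) →
        ∀ X Y : ℝ, 2 ≤ X → 2 ≤ Y → c * Real.log X ≥ Real.log Y * Real.log (Real.log Y) →
          |(((Set.Icc (1 : ℤ) (⌊X⌋₊ : ℤ) ∩ WSet g Y).ncard : ℝ) - X * wProd g Y)| ≤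
            C * X * Real.exp (-c * Real.log X / Real.log Y) := by
  classical
  obtain ⟨M, hM⟩ : ∃ M : ℕ, ∀ s ∈ S, s ≤ (M : ℤ) := by
    refine ⟨∑ s ∈ S, s.natAbs, fun s hs => ?_⟩
    have h1 : s.natAbs ≤ ∑ s ∈ S, s.natAbs :=
      Finset.single_le_sum (f := fun s : ℤ => s.natAbs) (fun _ _ => Nat.zero_le _) hs
    have h2 : s ≤ (s.natAbs : ℤ) := Int.le_natAbs
    exact h2.trans (by exact_mod_cast h1)
  obtain ⟨c, C, hc, hC, H⟩ := analytic (k + M ^ 2) (by omega)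
  refine ⟨c, C, hc, hC, ?_⟩
  intro g hg _ hgS X Y hX hY hXY
  set bad : ℕ → ℕ → Prop := fun p n =>
    ((p : ℤ) ^ gammaExp g p) ∣ (Polynomial.derivative g).eval (n : ℤ) with hbad
  set m : ℕ → ℕ := fun p => p ^ gammaExp g p with hm
  have hspec := fun p hp => gamma_spec g S M hM hgS p hp
  have hj : ∀ p, jCount g p = (m p).count (bad p) := by
    intro p
    rw [Nat.count_eq_card_filter_range, jCount_eq]
  have key := H bad m (fun p hp => Nat.le_self_pow (hspec p hp).1.ne' p)
    (fun p q hp hq hpq => Nat.Coprime.pow _ _ ((Nat.coprime_primes hp hq).2 hpq))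
    (by
      intro p _ n
      simp only [hbad, hm, eq_iff_iff]
      have h1 := Polynomial.sub_dvd_eval_sub ((n + p ^ gammaExp g p : ℕ) : ℤ) (n : ℤ)
        (Polynomial.derivative g)
      have h2 : ((n + p ^ gammaExp g p : ℕ) : ℤ) - n = (p:ℤ) ^ gammaExp g p := by
        push_cast; ring
      rw [h2] at h1
      exact (dvd_iff_dvd_of_dvd_sub h1))
    (by
      intro p hp
      have := j_le g k M hg p hp (hspec p hp).2.1 (hspec p hp).2.2
      rw [hj] at this
      convert this)
    X Y hX hY hXY _ rfl
  have e1 : wProd g Y = ∏ p ∈ (Finset.range (⌊Y⌋₊ + 1)).filter Nat.Prime,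
        (1 - ((m p).count (bad p) : ℝ) / m p) := by
    unfold wProd
    apply Finset.prod_congr
    · congr
    · intro p _
      rw [hj]; simp only [hm]; push_cast; rfl
  have e2 : (Set.Icc (1 : ℤ) (⌊X⌋₊ : ℤ) ∩ WSet g Y).ncard =
      ((Finset.Ico 1 (1 + ⌊X⌋₊)).filter
        (fun n => ∀ p ∈ (Finset.range (⌊Y⌋₊ + 1)).filter Nat.Prime, ¬ bad p n)).card := by
    rw [← Finset.card_image_of_injective _ (Nat.cast_injective (R := ℤ)), ← Set.ncard_coe_finset]
    congr 1
    ext n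
    simp only [Set.mem_inter_iff, Set.mem_Icc, WSet, Set.mem_ofPred_eq, Finset.coe_image,
      Finset.coe_filter, Set.mem_image, Finset.mem_Ico, Finset.mem_filter, Finset.mem_range, hbad]
    have hfl : ∀ p : ℕ, (p:ℝ) ≤ Y ↔ p < ⌊Y⌋₊ + 1 := by
      intro p
      rw [Nat.lt_succ_iff, Nat.le_floor_iff (by linarith)]
    constructor
    · rintro ⟨⟨h1, h2⟩, h3⟩
      refine ⟨n.toNat, ⟨by omega, ?_⟩, by omega⟩
      intro p hp
      rw [Int.toNat_of_nonneg (by omega)]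
      exact h3 p hp.2 ((hfl p).2 hp.1)
    · rintro ⟨a, ⟨h1, h2⟩, rfl⟩
      refine ⟨by omega, ?_⟩
      intro p hp hpY
      exact h2 p ⟨(hfl p).1 hpY, hp⟩
  rw [e1, e2]
  convert key
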